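/- Let α ∈ ℤ∖{0} and λ ∈ ℝ. There exists a nonzero smooth Γ-periodic function φ: ℝ³ → ℂ with ∂_zφ = iαφ and −Δ_𝐇 φ = λφ if and only if λ = (2n+1)|α| for some n ∈ ℕ. (The description of the spectrum of −Δ_𝐇 on the α-th Fourier mode in z, via the harmonic oscillator Ω with eigenvalues 2n+1, used in Section 1.5 and Section 5.2 of the paper.) -/

import Mathlib

/-!
On the `α`-th Fourier mode (smooth `Γ`-periodic functions with `Zφ = iαφ`) the fields `X`, `Y`
preserve the mode and satisfy `[X, Y] = -Z = -iα`. Hence, for `s = ±i`, the ladder operators satisfy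
`(X - sY)(X + sY) = Δ - iαs` (`IsMode.ladder_ladder`), and `X + sY` shifts eigenvalues of `-Δ`
by `2iαs` (`IsMode.ladder_eigen`). Complex conjugation exchanges the modes `α` and `-α`, so one may
take `α > 0`; then `X + iY` lowers eigenvalues by `2α` and `X - iY` raises them by `2α`.

Necessity. Eigenvalues are nonnegative by the maximum principle (`IsMode.eigen_nonneg`): `|φ|`
attains its maximum by compactness of the quotient, and at a maximum point `p` both
`Re (conj (φ p) X²φ)` and `Re (conj (φ p) Y²φ)` are nonpositive, as second derivatives along lines.
Lowering therefore reaches zero after finitely many steps, and a nonzero `ψ` with `(X + iY)ψ = 0`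
satisfies `0 = (X - iY)(X + iY)ψ = (Δ + α)ψ`, i.e. has eigenvalue `α`. So `λ = (2n+1)α`.

Sufficiency. The equation `(X + iY)ψ = 0` says that `ψ = exp(iαz - αx²/2) g(x + iy)` with `g`
holomorphic, and periodicity becomes the quasi-periodicity of a theta function. Jacobi's theta
function gives such a `g` (`groundState`), and raising the ground state produces every `(2n+1)α`;
raising never gives zero because `(X + iY)(X - iY) = Δ - α` multiplies an eigenfunction by
`-(λ + α) ≠ 0`.
-/

open MeasureTheory Filter Real Topology

noncomputable section

abbrev Pt (m : ℕ) : Type := (Fin m → ℝ) × (Fin m → ℝ) × (Fin m → ℝ)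

def eX (m : ℕ) (j : Fin m) : Pt m := (Pi.single j 1, 0, 0)
def eY (m : ℕ) (j : Fin m) : Pt m := (0, Pi.single j 1, 0)
def eZ (m : ℕ) (j : Fin m) : Pt m := (0, 0, Pi.single j 1)

/-- The vector field X_j = ∂_{x_j}. -/
def Xop {m : ℕ} (j : Fin m) (φ : Pt m → ℂ) : Pt m → ℂ := fun q => fderiv ℝ φ q (eX m j)

/-- The vector field ∂_{z_j}. -/
def Zop {m : ℕ} (j : Fin m) (φ : Pt m → ℂ) : Pt m → ℂ := fun q => fderiv ℝ φ q (eZ m j)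

/-- The vector field Y_j = ∂_{y_j} - x_j ∂_{z_j}. -/
def Yop {m : ℕ} (j : Fin m) (φ : Pt m → ℂ) : Pt m → ℂ :=
  fun q => fderiv ℝ φ q (eY m j) - (q.1 j : ℂ) * fderiv ℝ φ q (eZ m j)

/-- Δ_j = X_j² + Y_j². -/
def DeltaJ {m : ℕ} (j : Fin m) (φ : Pt m → ℂ) : Pt m → ℂ :=
  fun q => Xop j (Xop j φ) q + Yop j (Yop j φ) q

/-- Δ = Δ_1 + ⋯ + Δ_m. -/
def Delta {m : ℕ} (φ : Pt m → ℂ) : Pt m → ℂ := fun q => ∑ j, DeltaJ j φ q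

/-- Left translation by ((a_j, b_j, c_j))_j on each Heisenberg factor. -/
def heisAct {m : ℕ} (a b c : Fin m → ℝ) (q : Pt m) : Pt m :=
  (fun j => a j + q.1 j, fun j => b j + q.2.1 j, fun j => c j + q.2.2 j - a j * q.2.1 j)

def InGamma {m : ℕ} (a b c : Fin m → ℝ) : Prop :=
  (∀ j, ∃ k : ℤ, a j = k * Real.sqrt (2 * π)) ∧
  (∀ j, ∃ k : ℤ, b j = k * Real.sqrt (2 * π)) ∧
  (∀ j, ∃ k : ℤ, c j = k * (2 * π))

def GPeriodic {m : ℕ} {α : Type} (φ : Pt m → α) : Prop :=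
  ∀ a b c : Fin m → ℝ, InGamma a b c → ∀ q, φ (heisAct a b c q) = φ q

def Dset (m : ℕ) : Set (Pt m) :=
  {q | ∀ j, q.1 j ∈ Set.Ico 0 (Real.sqrt (2 * π)) ∧
        q.2.1 j ∈ Set.Ico 0 (Real.sqrt (2 * π)) ∧
        q.2.2 j ∈ Set.Ico 0 (2 * π)}

structure EigenSeq (m : ℕ) (φ : ℕ → Pt m → ℂ) (lam : ℕ → ℝ) : Prop where
  smooth : ∀ k, ContDiff ℝ (⊤ : ℕ∞) (φ k)
  periodic : ∀ k, GPeriodic (φ k)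
  normalized : ∀ k, ∫ q in Dset m, ‖φ k q‖ ^ 2 = 1
  eigen : ∀ k q, -Delta (φ k) q = (lam k : ℂ) * φ k q

/-- The translation flow T_t^v : adds t v_j to each z_j coordinate. -/
def Ttrans {m : ℕ} (v : Fin m → ℝ) (t : ℝ) (q : Pt m) : Pt m :=
  (q.1, q.2.1, fun j => q.2.2 j + t * v j)

def TInvariant {m : ℕ} (v : Fin m → ℝ) (η : Measure (Pt m)) : Prop :=
  ∀ t : ℝ, ∀ a : Pt m → ℝ, Continuous a → GPeriodic a →
    ∫ q, a (Ttrans v t q) ∂η = ∫ q, a q ∂η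

def sphereL1 (m : ℕ) : Set (Fin m → ℝ) := {v | ∑ j, |v j| = 1}

/-! ### Calculus for the fields `X`, `Y`, `Z` -/

lemma contDiff_fderiv_apply_const {φ : Pt 1 → ℂ} (h : ContDiff ℝ (⊤ : ℕ∞) φ) (v : Pt 1) :
    ContDiff ℝ (⊤ : ℕ∞) (fun q => fderiv ℝ φ q v) :=
  (h.fderiv_right (m := ((⊤ : ℕ∞) : WithTop ℕ∞)) (by simp)).clm_apply contDiff_const

lemma fderiv_fderiv_apply_comm {φ : Pt 1 → ℂ} (h : ContDiff ℝ (⊤ : ℕ∞) φ) (v w q : Pt 1) :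
    fderiv ℝ (fun q => fderiv ℝ φ q v) q w = fderiv ℝ (fun q => fderiv ℝ φ q w) q v := by
  have hd : DifferentiableAt ℝ (fderiv ℝ φ) q :=
    ((h.fderiv_right (m := ((⊤ : ℕ∞) : WithTop ℕ∞)) (by simp)).differentiable (by simp)) q
  have hs : IsSymmSndFDerivAt ℝ φ q :=
    (h.contDiffAt (x := q)).isSymmSndFDerivAt (by
      rw [minSmoothness_of_isRCLikeNormedField]
      exact WithTop.coe_le_coe.2 (le_top : (2 : ℕ∞) ≤ ⊤))
  have key : ∀ v w : Pt 1, fderiv ℝ (fun q => fderiv ℝ φ q v) q w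
      = fderiv ℝ (fderiv ℝ φ) q w v := by
    intro v w
    rw [fderiv_clm_apply hd (differentiableAt_const v)]
    simp
  rw [key, key]
  exact hs.eq w v

lemma contDiff_xcoord : ContDiff ℝ (⊤ : ℕ∞) (fun q : Pt 1 => ((q.1 0 : ℝ) : ℂ)) :=
  Complex.ofRealCLM.contDiff.comp (by fun_prop)

lemma fderiv_xcoord_mul {φ : Pt 1 → ℂ} (h : Differentiable ℝ φ) (q v : Pt 1) :
    fderiv ℝ (fun q : Pt 1 => ((q.1 0 : ℝ) : ℂ) * φ q) q v
      = (v.1 0 : ℂ) * φ q + (q.1 0 : ℂ) * fderiv ℝ φ q v := by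
  have hx : HasFDerivAt (fun q : Pt 1 => ((q.1 0 : ℝ) : ℂ))
      (Complex.ofRealCLM.comp ((ContinuousLinearMap.proj (R := ℝ) (φ := fun _ : Fin 1 => ℝ) 0).comp
        (ContinuousLinearMap.fst ℝ (Fin 1 → ℝ) ((Fin 1 → ℝ) × (Fin 1 → ℝ))))) q := by
    exact (Complex.ofRealCLM.comp
      ((ContinuousLinearMap.proj (R := ℝ) (φ := fun _ : Fin 1 => ℝ) 0).comp
        (ContinuousLinearMap.fst ℝ (Fin 1 → ℝ) ((Fin 1 → ℝ) × (Fin 1 → ℝ))))).hasFDerivAt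
  rw [(hx.fun_mul (h q).hasFDerivAt).fderiv]
  simp
  ring

lemma hasDerivAt_line {φ : Pt 1 → ℂ} (h : Differentiable ℝ φ) (q v : Pt 1) (t : ℝ) :
    HasDerivAt (fun t : ℝ => φ (q + t • v)) (fderiv ℝ φ (q + t • v) v) t := by
  have h1 : HasDerivAt (fun t : ℝ => q + t • v) v t := by
    simpa using ((hasDerivAt_id t).smul_const v).const_add q
  exact (h _).hasFDerivAt.comp_hasDerivAt t h1

lemma Yop_eq_fderiv (φ : Pt 1 → ℂ) (q : Pt 1) :
    Yop 0 φ q = fderiv ℝ φ q (eY 1 0 - q.1 0 • eZ 1 0) := by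
  simp [Yop]

lemma contDiff_Xop {φ : Pt 1 → ℂ} (h : ContDiff ℝ (⊤ : ℕ∞) φ) :
    ContDiff ℝ (⊤ : ℕ∞) (Xop 0 φ) := contDiff_fderiv_apply_const h _

lemma contDiff_Yop {φ : Pt 1 → ℂ} (h : ContDiff ℝ (⊤ : ℕ∞) φ) :
    ContDiff ℝ (⊤ : ℕ∞) (Yop 0 φ) :=
  (contDiff_fderiv_apply_const h _).sub
    (contDiff_xcoord.mul (contDiff_fderiv_apply_const h _))

lemma fderiv_add_const_mul {φ ψ : Pt 1 → ℂ} (hφ : Differentiable ℝ φ) (hψ : Differentiable ℝ ψ)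
    (s : ℂ) (q v : Pt 1) :
    fderiv ℝ (fun q => φ q + s * ψ q) q v = fderiv ℝ φ q v + s * fderiv ℝ ψ q v := by
  rw [fderiv_fun_add (hφ q) ((hψ q).const_mul s), fderiv_const_mul (hψ q)]
  simp

lemma Xop_add_const_mul {φ ψ : Pt 1 → ℂ} (hφ : Differentiable ℝ φ) (hψ : Differentiable ℝ ψ)
    (s : ℂ) (q : Pt 1) :
    Xop 0 (fun q => φ q + s * ψ q) q = Xop 0 φ q + s * Xop 0 ψ q :=
  fderiv_add_const_mul hφ hψ s q _

lemma Yop_add_const_mul {φ ψ : Pt 1 → ℂ} (hφ : Differentiable ℝ φ) (hψ : Differentiable ℝ ψ)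
    (s : ℂ) (q : Pt 1) :
    Yop 0 (fun q => φ q + s * ψ q) q = Yop 0 φ q + s * Yop 0 ψ q := by
  simp only [Yop, fderiv_add_const_mul hφ hψ]
  ring

lemma Delta_one (φ : Pt 1 → ℂ) (q : Pt 1) :
    Delta φ q = Xop 0 (Xop 0 φ) q + Yop 0 (Yop 0 φ) q := by
  simp [Delta, DeltaJ]

/-! ### Invariance under left translations -/

/-- Left translations commute with the right translations by `(t, 0, 0)`. -/
lemma heisAct_add_X (a b c : Fin 1 → ℝ) (q : Pt 1) (t : ℝ) :
    heisAct a b c (q + t • eX 1 0) = heisAct a b c q + t • eX 1 0 := by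
  ext j <;> fin_cases j <;> simp [heisAct, eX]
  ring

/-- Left translations commute with the right translations by `(0, t, 0)`. -/
lemma heisAct_add_Y (a b c : Fin 1 → ℝ) (q : Pt 1) (t : ℝ) :
    heisAct a b c (q + t • (eY 1 0 - q.1 0 • eZ 1 0))
      = heisAct a b c q + t • (eY 1 0 - (heisAct a b c q).1 0 • eZ 1 0) := by
  ext j <;> fin_cases j <;> simp [heisAct, eY, eZ] <;> ring

lemma GPeriodic.Xop {φ : Pt 1 → ℂ} (h : Differentiable ℝ φ) (hp : GPeriodic φ) :
    GPeriodic (Xop 0 φ) := by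
  intro a b c habc q
  have h1 := hasDerivAt_line h q (eX 1 0) 0
  have h2 := hasDerivAt_line h (heisAct a b c q) (eX 1 0) 0
  simp only [← heisAct_add_X, hp a b c habc] at h2
  have := h2.unique h1
  simpa [_root_.Xop, hp a b c habc, heisAct_add_X] using this

lemma GPeriodic.Yop {φ : Pt 1 → ℂ} (h : Differentiable ℝ φ) (hp : GPeriodic φ) :
    GPeriodic (Yop 0 φ) := by
  intro a b c habc q
  rw [Yop_eq_fderiv, Yop_eq_fderiv]
  have h1 := hasDerivAt_line h q (eY 1 0 - q.1 0 • eZ 1 0) 0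
  have h2 := hasDerivAt_line h (heisAct a b c q)
    (eY 1 0 - (heisAct a b c q).1 0 • eZ 1 0) 0
  have h3 : (fun t : ℝ => φ (heisAct a b c q + t • (eY 1 0 - (heisAct a b c q).1 0 • eZ 1 0)))
      = fun t : ℝ => φ (q + t • (eY 1 0 - q.1 0 • eZ 1 0)) := by
    funext t
    rw [← heisAct_add_Y, hp a b c habc]
  rw [h3] at h2
  have := h2.unique h1
  simpa only [zero_smul, add_zero] using this

/-! ### Fourier modes and ladder operators -/

/-- The `α`-th Fourier mode: smooth `Γ`-periodic functions with `∂_z φ = iαφ`. -/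
structure IsMode (α : ℤ) (φ : Pt 1 → ℂ) : Prop where
  smooth : ContDiff ℝ (⊤ : ℕ∞) φ
  periodic : GPeriodic φ
  zeig : ∀ q, Zop 0 φ q = Complex.I * (α : ℂ) * φ q

/-- The operator `X + sY`; the ladder operators are the cases `s = ±i`. -/
def ladder (s : ℂ) (φ : Pt 1 → ℂ) : Pt 1 → ℂ := fun q => Xop 0 φ q + s * Yop 0 φ q

namespace IsMode

variable {α : ℤ} {φ : Pt 1 → ℂ}

lemma diff (h : IsMode α φ) : Differentiable ℝ φ := h.smooth.differentiable (by simp)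

lemma Yop_eq (h : IsMode α φ) :
    Yop 0 φ = fun q => fderiv ℝ φ q (eY 1 0)
      + (-(Complex.I * α)) * ((q.1 0 : ℂ) * φ q) := by
  funext q
  have := h.zeig q
  simp only [Zop] at this
  simp only [Yop, this]
  ring

lemma fderiv_Yop (h : IsMode α φ) (q v : Pt 1) :
    fderiv ℝ (Yop 0 φ) q v = fderiv ℝ (fun q => fderiv ℝ φ q v) q (eY 1 0)
      - Complex.I * α * ((v.1 0 : ℂ) * φ q + (q.1 0 : ℂ) * fderiv ℝ φ q v) := by
  rw [h.Yop_eq, fderiv_add_const_mul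
    ((contDiff_fderiv_apply_const h.smooth _).differentiable (by simp))
    ((contDiff_xcoord.mul h.smooth).differentiable (by simp)),
    fderiv_xcoord_mul h.diff, fderiv_fderiv_apply_comm h.smooth]
  ring

lemma fderiv_Z_fun (h : IsMode α φ) :
    (fun q => fderiv ℝ φ q (eZ 1 0)) = fun q => Complex.I * (α : ℂ) * φ q :=
  funext h.zeig

lemma X (h : IsMode α φ) : IsMode α (Xop 0 φ) where
  smooth := contDiff_Xop h.smooth
  periodic := h.periodic.Xop h.diff
  zeig q := by
    change fderiv ℝ (fun q => fderiv ℝ φ q (eX 1 0)) q (eZ 1 0) = _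
    rw [fderiv_fderiv_apply_comm h.smooth, h.fderiv_Z_fun, fderiv_const_mul (h.diff q)]
    simp [Xop]

lemma Y (h : IsMode α φ) : IsMode α (Yop 0 φ) where
  smooth := contDiff_Yop h.smooth
  periodic := h.periodic.Yop h.diff
  zeig q := by
    have hz := h.zeig q
    simp only [Zop] at hz ⊢
    rw [h.fderiv_Yop, h.fderiv_Z_fun, fderiv_const_mul (h.diff q), hz, h.Yop_eq]
    simp [eZ]
    ring

/-- The Heisenberg commutation relation `[X, Y] = -Z` on the `α`-th mode. -/
lemma commutator (h : IsMode α φ) (q : Pt 1) :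
    Xop 0 (Yop 0 φ) q - Yop 0 (Xop 0 φ) q = -(Complex.I * α * φ q) := by
  have hx1 : (eX 1 0).1 0 = 1 := by simp [eX]
  rw [h.X.Yop_eq]
  change fderiv ℝ (Yop 0 φ) q (eX 1 0) - (fderiv ℝ (fun q => fderiv ℝ φ q (eX 1 0)) q (eY 1 0)
    + -(Complex.I * α) * ((q.1 0 : ℂ) * fderiv ℝ φ q (eX 1 0))) = _
  rw [h.fderiv_Yop, hx1]
  push_cast
  ring

lemma ladder (h : IsMode α φ) (s : ℂ) : IsMode α (ladder s φ) where
  smooth := h.X.smooth.add (contDiff_const.mul h.Y.smooth)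
  periodic a b c habc q := by
    simp only [_root_.ladder, h.X.periodic a b c habc q, h.Y.periodic a b c habc q]
  zeig q := by
    have hx := h.X.zeig q
    have hy := h.Y.zeig q
    simp only [Zop] at hx hy ⊢
    unfold _root_.ladder
    rw [fderiv_add_const_mul h.X.diff h.Y.diff, hx, hy]
    ring

/-- Factorization `(X - sY)(X + sY) = Δ + s[X, Y] = Δ - iαs` for `s² = -1`. -/
lemma ladder_ladder (h : IsMode α φ) {s : ℂ} (hs : s * s = -1) (q : Pt 1) :
    _root_.ladder (-s) (_root_.ladder s φ) q = Delta φ q - s * Complex.I * α * φ q := by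
  have hc := h.commutator q
  rw [Delta_one]
  unfold _root_.ladder
  rw [Xop_add_const_mul h.X.diff h.Y.diff, Yop_add_const_mul h.X.diff h.Y.diff]
  linear_combination s * hc - Yop 0 (Yop 0 φ) q * hs

/-- `X + sY` shifts the eigenvalue by `2iαs`. -/
lemma ladder_eigen (h : IsMode α φ) {lam s : ℂ} (hs : s * s = -1)
    (he : ∀ q, -Delta φ q = lam * φ q) (q : Pt 1) :
    -Delta (_root_.ladder s φ) q = (lam + 2 * s * Complex.I * α) * _root_.ladder s φ q := by
  have h1 := (h.ladder s).ladder_ladder (s := -s) (by simpa using hs) q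
  have h2 : _root_.ladder (-s) (_root_.ladder s φ)
      = fun q => (0 : ℂ) + (-(lam + s * Complex.I * α)) * φ q := by
    funext q
    rw [h.ladder_ladder hs]
    linear_combination -he q
  have h3 : _root_.ladder s (_root_.ladder (-s) (_root_.ladder s φ)) q
      = (-(lam + s * Complex.I * α)) * _root_.ladder s φ q := by
    rw [h2]
    unfold _root_.ladder
    rw [Xop_add_const_mul (differentiable_const 0) h.diff,
      Yop_add_const_mul (differentiable_const 0) h.diff]
    simp [Xop, Yop]
    ring
  rw [neg_neg, h3] at h1
  linear_combination h1

/-! ### The maximum principle -/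

/-- Every `Γ`-orbit meets a compact box, so `|φ|` attains its maximum. -/
lemma exists_max (h : IsMode α φ) : ∃ p, ∀ q, ‖φ q‖ ≤ ‖φ p‖ := by
  have hs : 0 < √(2 * π) := by positivity
  have hpi : 0 < 2 * π := by positivity
  let top : Pt 1 := (fun _ => √(2 * π), fun _ => √(2 * π), fun _ => 2 * π)
  have htop : (0 : Pt 1) ≤ top :=
    ⟨fun _ => hs.le, fun _ => hs.le, fun _ => hpi.le⟩
  have hred : ∀ (x r : ℝ), 0 < r → ∃ k : ℤ, 0 ≤ k * r + x ∧ k * r + x ≤ r := by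
    intro x r hr
    refine ⟨-⌊x / r⌋, ?_, ?_⟩
    · have := (le_div_iff₀ hr).1 (Int.floor_le (x / r))
      push_cast; linarith
    · have := (div_lt_iff₀ hr).1 (Int.lt_floor_add_one (x / r))
      push_cast; linarith
  obtain ⟨p, -, hp⟩ := (isCompact_Icc (a := (0 : Pt 1)) (b := top)).exists_isMaxOn
    ⟨0, le_rfl, htop⟩ (h.smooth.continuous.norm.continuousOn)
  refine ⟨p, fun q => ?_⟩
  obtain ⟨k, hk0, hk1⟩ := hred (q.1 0) _ hs
  obtain ⟨l, hl0, hl1⟩ := hred (q.2.1 0) _ hs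
  obtain ⟨m, hm0, hm1⟩ := hred (q.2.2 0 - k * √(2 * π) * q.2.1 0) _ hpi
  have hper := h.periodic (fun _ => k * √(2 * π)) (fun _ => l * √(2 * π)) (fun _ => m * (2 * π))
    ⟨fun _ => ⟨k, rfl⟩, fun _ => ⟨l, rfl⟩, fun _ => ⟨m, rfl⟩⟩ q
  rw [← hper]
  apply hp
  refine ⟨⟨fun j => ?_, fun j => ?_, fun j => ?_⟩, fun j => ?_, fun j => ?_, fun j => ?_⟩ <;>
    fin_cases j <;>
    simp only [heisAct, top, Fin.zero_eta, Prod.fst_zero, Prod.snd_zero, Pi.zero_apply] <;>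
    linarith

end IsMode

lemma second_deriv_nonpos_of_isLocalMax {u u' : ℝ → ℝ} {u'' x : ℝ}
    (h1 : ∀ t, HasDerivAt u (u' t) t) (h2 : HasDerivAt u' u'' x) (hm : IsLocalMax u x) :
    u'' ≤ 0 := by
  by_contra! hpos
  have hd : deriv u = u' := funext fun t => (h1 t).deriv
  have hmin : IsLocalMin u x := isLocalMin_of_deriv_deriv_pos (by rw [hd, h2.deriv]; exact hpos)
    hm.deriv_eq_zero (h1 x).continuousAt
  have hconst : u =ᶠ[𝓝 x] fun _ => u x := by
    filter_upwards [hm, hmin] with t ht1 ht2 using le_antisymm ht1 ht2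
  have h3 := hconst.deriv.deriv_eq
  rw [hd, h2.deriv] at h3
  simp at h3
  exact hpos.ne' h3

/-- Second-derivative test along the line through `p` in direction `v`, where `ψ` is the
derivative of `φ` along that whole line. -/
lemma re_second_deriv_nonpos {φ ψ : Pt 1 → ℂ} (hφ : Differentiable ℝ φ) (hψ : Differentiable ℝ ψ)
    {p v : Pt 1} {w : ℂ} (hmax : ∀ q, (w * φ q).re ≤ (w * φ p).re)
    (hψv : ∀ t : ℝ, fderiv ℝ φ (p + t • v) v = ψ (p + t • v)) :
    (w * fderiv ℝ ψ p v).re ≤ 0 := by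
  have hre : ∀ (f : ℝ → ℂ) (f' : ℂ) (t : ℝ), HasDerivAt f f' t →
      HasDerivAt (fun t => (w * f t).re) (w * f').re t := fun f f' t hf =>
    Complex.reCLM.hasFDerivAt.comp_hasDerivAt t (hf.const_mul w)
  have h1 : ∀ t : ℝ, HasDerivAt (fun t : ℝ => (w * φ (p + t • v)).re)
      (w * ψ (p + t • v)).re t := fun t =>
    hre _ _ _ (by rw [← hψv]; exact hasDerivAt_line hφ p v t)
  have h2 := hre _ _ _ (hasDerivAt_line hψ p v 0)
  have := second_deriv_nonpos_of_isLocalMax h1 h2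
    (Filter.Eventually.of_forall fun t => by simpa using hmax (p + t • v))
  simpa using this

/-- Maximum principle: `-Δ` has no negative eigenvalue. -/
lemma IsMode.eigen_nonneg {α : ℤ} {φ : Pt 1 → ℂ} (h : IsMode α φ) (h0 : φ ≠ 0) {lam : ℝ}
    (he : ∀ q, -Delta φ q = (lam : ℂ) * φ q) : 0 ≤ lam := by
  obtain ⟨p, hp⟩ := h.exists_max
  have hpne : φ p ≠ 0 := by
    intro h00
    apply h0
    funext q
    simpa [h00] using hp q
  -- Rotating by the conjugate of `φ p` makes the value at `p` real and positive.
  set w : ℂ := (starRingEnd ℂ) (φ p) with hw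
  have hwp : w * φ p = ((‖φ p‖ ^ 2 : ℝ) : ℂ) := by
    rw [hw, mul_comm, Complex.mul_conj, Complex.normSq_eq_norm_sq]
  have hmax : ∀ q, (w * φ q).re ≤ (w * φ p).re := by
    intro q
    rw [hwp, Complex.ofReal_re]
    calc (w * φ q).re ≤ ‖w * φ q‖ := Complex.re_le_norm _
      _ = ‖φ p‖ * ‖φ q‖ := by rw [norm_mul, hw, RCLike.norm_conj]
      _ ≤ ‖φ p‖ ^ 2 := by nlinarith [hp q, norm_nonneg (φ p)]
  have hX : (w * Xop 0 (Xop 0 φ) p).re ≤ 0 :=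
    re_second_deriv_nonpos h.diff h.X.diff hmax (fun t => rfl)
  have hY : (w * Yop 0 (Yop 0 φ) p).re ≤ 0 := by
    rw [Yop_eq_fderiv (Yop 0 φ)]
    refine re_second_deriv_nonpos h.diff h.Y.diff hmax (fun t => ?_)
    rw [Yop_eq_fderiv]
    simp [eY, eZ]
  have hE : ((lam * ‖φ p‖ ^ 2 : ℝ) : ℂ)
      = -(w * Xop 0 (Xop 0 φ) p + w * Yop 0 (Yop 0 φ) p) := by
    have := he p
    rw [Delta_one] at this
    rw [Complex.ofReal_mul, ← hwp]
    linear_combination -w * this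
  have hE' := congrArg Complex.re hE
  rw [Complex.ofReal_re, Complex.neg_re, Complex.add_re] at hE'
  have hpos : 0 < ‖φ p‖ ^ 2 := by positivity
  by_contra! hneg
  nlinarith

/-! ### Complex conjugation -/

lemma fderiv_conj (φ : Pt 1 → ℂ) (q v : Pt 1) :
    fderiv ℝ (fun q => (starRingEnd ℂ) (φ q)) q v = (starRingEnd ℂ) (fderiv ℝ φ q v) := by
  have := (Complex.conjCLE : ℂ ≃L[ℝ] ℂ).comp_fderiv (f := φ) (x := q)
  have h2 := congrArg (fun L => L v) this
  exact h2

lemma Delta_conj (φ : Pt 1 → ℂ) (q : Pt 1) :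
    Delta (fun q => (starRingEnd ℂ) (φ q)) q = (starRingEnd ℂ) (Delta φ q) := by
  have hX : ∀ ψ : Pt 1 → ℂ, Xop 0 (fun q => (starRingEnd ℂ) (ψ q))
      = fun q => (starRingEnd ℂ) (Xop 0 ψ q) := fun ψ => by
    funext q; simp [Xop, fderiv_conj]
  have hY : ∀ ψ : Pt 1 → ℂ, Yop 0 (fun q => (starRingEnd ℂ) (ψ q))
      = fun q => (starRingEnd ℂ) (Yop 0 ψ q) := fun ψ => by
    funext q; simp [Yop, fderiv_conj]
  simp [Delta_one, hX, hY]

lemma IsMode.conj {α : ℤ} {φ : Pt 1 → ℂ} (h : IsMode α φ) :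
    IsMode (-α) (fun q => (starRingEnd ℂ) (φ q)) where
  smooth := (Complex.conjCLE : ℂ ≃L[ℝ] ℂ).contDiff.comp h.smooth
  periodic a b c habc q := by simp only [h.periodic a b c habc q]
  zeig q := by
    have := h.zeig q
    simp only [Zop] at this ⊢
    rw [fderiv_conj, this]
    simp

/-! ### The ground state -/

lemma jacobiTheta₂_add_int (z τ : ℂ) (m : ℤ) :
    jacobiTheta₂ (z + m) τ = jacobiTheta₂ z τ := by
  refine tsum_congr fun n => ?_
  rw [jacobiTheta₂_term, jacobiTheta₂_term, Complex.exp_eq_exp_iff_exists_int]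
  exact ⟨n * m, by push_cast; ring⟩

lemma jacobiTheta₂_add_int_mul (z τ : ℂ) (k : ℤ) :
    jacobiTheta₂ (z + k * τ) τ
      = Complex.exp (-π * Complex.I * (k ^ 2 * τ + 2 * k * z)) * jacobiTheta₂ z τ := by
  conv_rhs => rw [jacobiTheta₂, ← tsum_mul_left, ← (Equiv.addRight k).tsum_eq]
  refine tsum_congr fun n => ?_
  simp_rw [jacobiTheta₂_term, ← Complex.exp_add, Equiv.coe_addRight, Int.cast_add]
  congr 1
  ring

lemma jacobiTheta₂_zero_ne_zero {a : ℝ} (ha : 0 < a) : jacobiTheta₂ 0 (Complex.I * a) ≠ 0 := by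
  have him : 0 < (Complex.I * (a : ℂ)).im := by simpa using ha
  have hs := hasSum_jacobiTheta₂_term 0 him
  have hterm : ∀ n : ℤ, jacobiTheta₂_term n 0 (Complex.I * a)
      = ((Real.exp (-π * n ^ 2 * a) : ℝ) : ℂ) := by
    intro n
    rw [jacobiTheta₂_term, Complex.ofReal_exp]
    congr 1
    push_cast
    linear_combination (π * n ^ 2 * a : ℂ) * Complex.I_mul_I
  rw [funext hterm] at hs
  have hre : HasSum (fun n : ℤ => Real.exp (-π * n ^ 2 * a)) (jacobiTheta₂ 0 (Complex.I * a)).re :=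
    by simpa only [Complex.ofReal_re] using Complex.hasSum_re hs
  have hpos : 0 < (jacobiTheta₂ 0 (Complex.I * a)).re := by
    rw [← hre.tsum_eq]
    exact hre.summable.tsum_pos (fun n => (Real.exp_pos _).le) 0 (Real.exp_pos _)
  intro h0
  simp [h0] at hpos

/-- The theta-function ground state
`exp(iαz - αx²/2) ϑ(-iα(x + iy)/√(2π), iα)` of the `α`-th mode. -/
def groundState (α : ℤ) (q : Pt 1) : ℂ :=
  Complex.exp (Complex.I * α * (q.2.2 0 : ℝ) - α * (q.1 0 : ℝ) ^ 2 / 2) *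
    jacobiTheta₂ (-Complex.I * α * ((q.1 0 : ℝ) + Complex.I * (q.2.1 0 : ℝ)) / (√(2 * π) : ℝ))
      (Complex.I * α)

lemma im_I_mul_pos {α : ℤ} (hα : 0 < α) : 0 < (Complex.I * (α : ℂ)).im := by simpa using hα

lemma groundState_contDiff {α : ℤ} (hα : 0 < α) : ContDiff ℝ (⊤ : ℕ∞) (groundState α) := by
  have hθ : Differentiable ℂ (fun z => jacobiTheta₂ z (Complex.I * α)) := fun z =>
    differentiableAt_jacobiTheta₂_fst z (im_I_mul_pos hα)
  have hθ' : ContDiff ℝ (⊤ : ℕ∞) (fun z => jacobiTheta₂ z (Complex.I * α)) :=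
    (hθ.contDiff (n := ((⊤ : ℕ∞) : WithTop ℕ∞))).restrict_scalars ℝ
  have hx := contDiff_xcoord
  have hy : ContDiff ℝ (⊤ : ℕ∞) (fun q : Pt 1 => ((q.2.1 0 : ℝ) : ℂ)) :=
    Complex.ofRealCLM.contDiff.comp (by fun_prop)
  have hz : ContDiff ℝ (⊤ : ℕ∞) (fun q : Pt 1 => ((q.2.2 0 : ℝ) : ℂ)) :=
    Complex.ofRealCLM.contDiff.comp (by fun_prop)
  unfold groundState
  refine ContDiff.mul ?_ (hθ'.comp ?_)
  · exact ((contDiff_const.mul hz).sub ((contDiff_const.mul (hx.pow 2)).div_const 2)).cexp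
  · exact (contDiff_const.mul (hx.add (contDiff_const.mul hy))).div_const _

/-- `E` is the exponential factor of the ground state and `D` the rescaled derivative of its theta
factor, which is holomorphic in `x + iy`. -/
lemma groundState_fderiv {α : ℤ} (hα : 0 < α) (q : Pt 1) :
    ∃ E D : ℂ, ∀ v : Pt 1,
    fderiv ℝ (groundState α) q v
      = (Complex.I * α * (v.2.2 0 : ℝ) - α * (q.1 0 : ℝ) * (v.1 0 : ℝ)) * groundState α q
        + E * (D * (-Complex.I * α * ((v.1 0 : ℝ) + Complex.I * (v.2.1 0 : ℝ)))) := by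
  refine ⟨Complex.exp (Complex.I * α * (q.2.2 0 : ℝ) - α * (q.1 0 : ℝ) ^ 2 / 2),
    deriv (fun z => jacobiTheta₂ z (Complex.I * α))
    (-Complex.I * α * ((q.1 0 : ℝ) + Complex.I * (q.2.1 0 : ℝ)) / (√(2 * π) : ℝ))
      / (√(2 * π) : ℝ), fun v => ?_⟩
  have hline := hasDerivAt_line ((groundState_contDiff hα).differentiable (by simp)) q v 0
  have hlin : ∀ x w : ℝ, HasDerivAt (fun t : ℝ => ((x + t * w : ℝ) : ℂ)) (w : ℂ) 0 := by
    intro x w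
    have : HasDerivAt (fun t : ℝ => x + t * w) w 0 := by
      simpa using ((hasDerivAt_id (0 : ℝ)).mul_const w).const_add x
    exact this.ofReal_comp
  have hx := hlin (q.1 0) (v.1 0)
  have hy := hlin (q.2.1 0) (v.2.1 0)
  have hz := hlin (q.2.2 0) (v.2.2 0)
  have he := ((hz.const_mul (Complex.I * α)).sub
    (((hx.pow 2).const_mul (α : ℂ)).div_const 2)).cexp
  have harg := ((hx.add (hy.const_mul Complex.I)).const_mul (-Complex.I * α)).div_const
    ((√(2 * π) : ℝ) : ℂ)
  have hθ := (differentiableAt_jacobiTheta₂_fst (-Complex.I * α *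
    (((q.1 0 + 0 * v.1 0 : ℝ) : ℂ) + Complex.I * ((q.2.1 0 + 0 * v.2.1 0 : ℝ) : ℂ))
      / (√(2 * π) : ℝ)) (im_I_mul_pos hα)).hasDerivAt
  have hprod := he.mul (HasDerivAt.comp (0 : ℝ) hθ harg)
  have huniq := hline.unique hprod
  simp only [zero_smul, add_zero] at huniq
  rw [huniq]
  simp [groundState]
  ring

lemma groundState_isMode {α : ℤ} (hα : 0 < α) : IsMode α (groundState α) where
  smooth := groundState_contDiff hα
  periodic := by
    rintro a b c ⟨ha, hb, hc⟩ q
    obtain ⟨k, hk⟩ := ha 0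
    obtain ⟨l, hl⟩ := hb 0
    obtain ⟨m, hm⟩ := hc 0
    have hs : ((√(2 * π) : ℝ) : ℂ) ^ 2 = 2 * π := by
      rw [← Complex.ofReal_pow, Real.sq_sqrt (by positivity)]
      push_cast; ring
    have hs0 : ((√(2 * π) : ℝ) : ℂ) ≠ 0 := by
      rw [Complex.ofReal_ne_zero]; positivity
    simp only [groundState, heisAct, hk, hl, hm]
    push_cast
    set s : ℂ := ((√(2 * π) : ℝ) : ℂ)
    set x : ℂ := ((q.1 0 : ℝ) : ℂ)
    set y : ℂ := ((q.2.1 0 : ℝ) : ℂ)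
    set z : ℂ := ((q.2.2 0 : ℝ) : ℂ)
    have harg : -Complex.I * α * (k * s + x + Complex.I * (l * s + y)) / s
        = (-Complex.I * α * (x + Complex.I * y) / s + ((-k : ℤ) : ℂ) * (Complex.I * α))
          + ((α * l : ℤ) : ℂ) := by
      field_simp
      push_cast
      linear_combination (-α * s * l : ℂ) * Complex.I_mul_I
    rw [harg, jacobiTheta₂_add_int, jacobiTheta₂_add_int_mul, ← mul_assoc, ← Complex.exp_add]
    congr 1
    rw [Complex.exp_eq_exp_iff_exists_int]
    refine ⟨α * m, ?_⟩
    have hpi : (π : ℂ) = s ^ 2 / 2 := by rw [hs]; ring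
    rw [hpi]
    push_cast
    field_simp
    have hI := Complex.I_sq
    have hI3 : Complex.I ^ 3 = -Complex.I := Complex.I_pow_three
    ring_nf
    simp only [hI, hI3]
    ring
  zeig q := by
    obtain ⟨E, D, h⟩ := groundState_fderiv hα q
    simp [Zop, h, eZ]

lemma groundState_ladder {α : ℤ} (hα : 0 < α) : ladder Complex.I (groundState α) = 0 := by
  funext q
  obtain ⟨E, D, h⟩ := groundState_fderiv hα q
  simp only [ladder, Xop, Yop, h]
  simp [eX, eY, eZ]
  linear_combination (-(q.1 0 : ℂ) * α * groundState α q - E * D * α * Complex.I) * Complex.I_mul_I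

lemma groundState_ne_zero {α : ℤ} (hα : 0 < α) : groundState α ≠ 0 := by
  intro h
  have h0 := congrFun h 0
  have hne := jacobiTheta₂_zero_ne_zero (a := (α : ℝ)) (by exact_mod_cast hα)
  simp [groundState] at h0
  exact hne (by simpa using h0)

/-! ### The spectrum for positive `α` -/

/-- Descent with the lowering operator `X + iY`, which drops the eigenvalue by `2α`. -/
lemma spectrum_descent {α : ℤ} (N : ℕ) : ∀ (φ : Pt 1 → ℂ) (lam : ℝ), IsMode α φ → φ ≠ 0 →
    (∀ q, -Delta φ q = (lam : ℂ) * φ q) → lam < 2 * α * N →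
    ∃ n : ℕ, lam = (2 * n + 1) * (α : ℝ) := by
  induction N with
  | zero =>
    intro φ lam h h0 he hlt
    have := h.eigen_nonneg h0 he
    simp at hlt
    linarith
  | succ N ih =>
    intro φ lam h h0 he hlt
    by_cases hD : ladder Complex.I φ = 0
    · -- Here `φ` is a ground state: `0 = (X - iY)(X + iY)φ = (Δ + α)φ`.
      refine ⟨0, ?_⟩
      obtain ⟨q, hq⟩ := Function.ne_iff.1 h0
      have h1 := h.ladder_ladder Complex.I_mul_I q
      have hz : ladder (-Complex.I) (0 : Pt 1 → ℂ) q = 0 := by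
        simp [ladder, Xop, Yop]
      rw [hD, hz, Complex.I_mul_I] at h1
      have h2 : ((lam : ℂ) - ((α : ℝ) : ℂ)) * φ q = 0 := by
        push_cast
        linear_combination -he q + h1
      have h3 := (mul_eq_zero.1 h2).resolve_right hq
      have h4 : lam = (α : ℝ) := by exact_mod_cast sub_eq_zero.1 h3
      simp [h4]
    · obtain ⟨n, hn⟩ := ih (ladder Complex.I φ) (lam - 2 * α) (h.ladder _) hD
        (fun q => by
          rw [h.ladder_eigen Complex.I_mul_I he, mul_assoc 2, Complex.I_mul_I]
          push_cast
          ring)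
        (by push_cast at hlt; linarith)
      exact ⟨n + 1, by push_cast; linarith⟩

/-- Excited states are obtained from the ground state by the raising operator `X - iY`. -/
lemma exists_eigenfunction {α : ℤ} (hα : 0 < α) (n : ℕ) :
    ∃ φ : Pt 1 → ℂ, IsMode α φ ∧ φ ≠ 0 ∧
    ∀ q, -Delta φ q = (((2 * n + 1) * (α : ℝ) : ℝ) : ℂ) * φ q := by
  induction n with
  | zero =>
    refine ⟨groundState α, groundState_isMode hα, groundState_ne_zero hα, fun q => ?_⟩
    have h1 := (groundState_isMode hα).ladder_ladder Complex.I_mul_I q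
    have hz : ladder (-Complex.I) (0 : Pt 1 → ℂ) q = 0 := by
      simp [ladder, Xop, Yop]
    rw [groundState_ladder hα, hz, Complex.I_mul_I] at h1
    push_cast
    linear_combination h1
  | succ n ih =>
    obtain ⟨φ, h, h0, he⟩ := ih
    have hII : -Complex.I * -Complex.I = -1 := by rw [neg_mul_neg, Complex.I_mul_I]
    refine ⟨ladder (-Complex.I) φ, h.ladder _, fun hD => ?_, fun q => ?_⟩
    · -- `(X + iY)(X - iY)φ = (Δ - α)φ` is a nonzero multiple of `φ`.
      obtain ⟨q, hq⟩ := Function.ne_iff.1 h0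
      have h1 := h.ladder_ladder hII q
      have hz : ladder (- -Complex.I) (0 : Pt 1 → ℂ) q = 0 := by
        simp [ladder, Xop, Yop]
      rw [hD, hz, neg_mul, Complex.I_mul_I] at h1
      have h2 : (((2 * n + 2) * (α : ℝ) : ℝ) : ℂ) * φ q = 0 := by
        have := he q
        push_cast at this ⊢
        linear_combination h1 - this
      have h3 := (mul_eq_zero.1 h2).resolve_right hq
      have hα' : (0 : ℝ) < α := by exact_mod_cast hα
      have h4 : (0 : ℝ) < (2 * n + 2) * (α : ℝ) := by positivity
      exact h4.ne' (by exact_mod_cast h3)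
    · rw [h.ladder_eigen hII he]
      push_cast
      linear_combination (-2 * α * ladder (-Complex.I) φ q) * Complex.I_mul_I

lemma spectrum_pos {α : ℤ} (hα : 0 < α) (lam : ℝ) :
    (∃ φ : Pt 1 → ℂ, IsMode α φ ∧ φ ≠ 0 ∧ ∀ q, -Delta φ q = (lam : ℂ) * φ q) ↔
      ∃ n : ℕ, lam = (2 * n + 1) * (α : ℝ) := by
  constructor
  · rintro ⟨φ, h, h0, he⟩
    have hα' : (0 : ℝ) < α := by exact_mod_cast hα
    obtain ⟨N, hN⟩ := exists_nat_gt (lam / (2 * α))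
    refine spectrum_descent N φ lam h h0 he ?_
    rw [div_lt_iff₀ (by positivity)] at hN
    linarith
  · rintro ⟨n, rfl⟩
    exact exists_eigenfunction hα n

/-- Complex conjugation exchanges the modes `α` and `-α` and preserves real eigenvalues. -/
lemma exists_mode_neg {α : ℤ} {lam : ℝ}
    (H : ∃ φ : Pt 1 → ℂ, IsMode α φ ∧ φ ≠ 0 ∧ ∀ q, -Delta φ q = (lam : ℂ) * φ q) :
    ∃ φ : Pt 1 → ℂ, IsMode (-α) φ ∧ φ ≠ 0 ∧ ∀ q, -Delta φ q = (lam : ℂ) * φ q := by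
  obtain ⟨φ, h, h0, he⟩ := H
  refine ⟨_, h.conj, fun hz => h0 ?_, fun q => ?_⟩
  · funext q
    simpa using congrFun hz q
  · rw [Delta_conj, ← map_neg, he q]
    simp

/-- On the α-th Fourier mode in z (α ≠ 0), the spectrum of the
3D Heisenberg sub-Laplacian is {(2n+1)|α| : n ∈ ℕ} (harmonic oscillator,
Sections 1.5 and 5.2 of the paper). -/
theorem heisenberg_spectrum_fourier_mode (α : ℤ) (hα : α ≠ 0) (lam : ℝ) :
    (∃ φ : Pt 1 → ℂ, φ ≠ 0 ∧ ContDiff ℝ (⊤ : ℕ∞) φ ∧ GPeriodic φ ∧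
      (∀ q, Zop 0 φ q = Complex.I * (α : ℂ) * φ q) ∧
      ∀ q, -Delta φ q = (lam : ℂ) * φ q) ↔
    (∃ n : ℕ, lam = (2 * n + 1) * |(α : ℝ)|) := by
  have hiff : (∃ φ : Pt 1 → ℂ, φ ≠ 0 ∧ ContDiff ℝ (⊤ : ℕ∞) φ ∧ GPeriodic φ ∧
      (∀ q, Zop 0 φ q = Complex.I * (α : ℂ) * φ q) ∧
      ∀ q, -Delta φ q = (lam : ℂ) * φ q) ↔
      ∃ φ : Pt 1 → ℂ, IsMode α φ ∧ φ ≠ 0 ∧ ∀ q, -Delta φ q = (lam : ℂ) * φ q :=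
    ⟨fun ⟨φ, h0, hs, hp, hz, he⟩ => ⟨φ, ⟨hs, hp, hz⟩, h0, he⟩,
      fun ⟨φ, h, h0, he⟩ => ⟨φ, h0, h.smooth, h.periodic, h.zeig, he⟩⟩
  rw [hiff]
  rcases lt_or_gt_of_ne hα with hneg | hpos
  · have hconj : (∃ φ : Pt 1 → ℂ, IsMode α φ ∧ φ ≠ 0 ∧ ∀ q, -Delta φ q = (lam : ℂ) * φ q) ↔
        ∃ φ : Pt 1 → ℂ, IsMode (-α) φ ∧ φ ≠ 0 ∧ ∀ q, -Delta φ q = (lam : ℂ) * φ q :=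
      ⟨exists_mode_neg, fun H => by simpa using exists_mode_neg H⟩
    rw [hconj, spectrum_pos (neg_pos.2 hneg), abs_of_neg (by exact_mod_cast hneg)]
    push_cast
    rfl
  · rw [spectrum_pos hpos, abs_of_pos (by exact_mod_cast hpos)]
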